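/- Let F denote the ħ-Fourier transform Fψ(p) = (2πħ)^(−n/2) ∫_{ℝⁿ} e^(−(i/ħ) p·x) ψ(x) dx. Then for every Schwartz symbol a : ℝ²ⁿ → ℂ, every Schwartz function ψ and every x ∈ ℝⁿ, F(A_BJψ)(x) = (B_BJ(Fψ))(x), where B_BJ is the Born–Jordan operator with symbol b(x,p) = a(−p, x) = (a ∘ J⁻¹)(x,p), J(x,p) = (p,−x) being the standard symplectic matrix. That is, Born–Jordan quantization is covariant under the metaplectic Fourier transform: F Op_BJ(a) F⁻¹ = Op_BJ(a ∘ J⁻¹). -/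

import Mathlib

open MeasureTheory Real Complex

noncomputable section

/-- Euclidean dot product on `ℝⁿ`. -/
def dotR {n : ℕ} (p y : Fin n → ℝ) : ℝ := ∑ i, p i * y i

/-- The `τ`-Wigner cross-distribution
`Wig_τ(ψ,φ)(x,p) = (2πhbar)^(−n) ∫ e^(−(i/hbar) p·y) ψ(x+τy) conj(φ(x−(1−τ)y)) dy`. -/
def WigTau (hbar : ℝ) {n : ℕ} (τ : ℝ) (ψ φ : (Fin n → ℝ) → ℂ) (x p : Fin n → ℝ) : ℂ :=
  ((((2 * π * hbar) ^ n : ℝ))⁻¹ : ℂ) *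
    ∫ y : Fin n → ℝ,
      Complex.exp (-(Complex.I / (hbar : ℂ)) * (dotR p y : ℝ)) *
        ψ (x + τ • y) * (starRingEnd ℂ) (φ (x - (1 - τ) • y))

/-- The Born–Jordan–Wigner cross-distribution: the average of the
`τ`-Wigner distributions over `τ ∈ [0,1]`. -/
def WigBJ (hbar : ℝ) {n : ℕ} (ψ φ : (Fin n → ℝ) → ℂ) (x p : Fin n → ℝ) : ℂ :=
  ∫ τ in (0:ℝ)..1, WigTau hbar τ ψ φ x p

/-- The `hbar`-Fourier transform `Fψ(p) = (2πhbar)^(−n/2) ∫ e^(−(i/hbar) p·x) ψ(x) dx`. -/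
def FourierHbar (hbar : ℝ) {n : ℕ} (ψ : (Fin n → ℝ) → ℂ) (p : Fin n → ℝ) : ℂ :=
  ((Real.sqrt ((2 * π * hbar) ^ n))⁻¹ : ℂ) *
    ∫ x : Fin n → ℝ, Complex.exp (-(Complex.I / (hbar : ℂ)) * (dotR p x : ℝ)) * ψ x

/-- The Shubin `τ`-operator
`A_τψ(x) = (2πhbar)^(−n) ∫∫ e^((i/hbar) p·(x−y)) a(τx+(1−τ)y, p) ψ(y) dp dy`,
the inner integral being over `p`. -/
def ShubinOp (hbar : ℝ) {n : ℕ} (τ : ℝ) (a : ((Fin n → ℝ) × (Fin n → ℝ)) → ℂ)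
    (ψ : (Fin n → ℝ) → ℂ) (x : Fin n → ℝ) : ℂ :=
  ((((2 * π * hbar) ^ n : ℝ))⁻¹ : ℂ) *
    ∫ y : Fin n → ℝ,
      (∫ p : Fin n → ℝ,
          Complex.exp ((Complex.I / (hbar : ℂ)) * (dotR p (x - y) : ℝ)) *
            a (τ • x + (1 - τ) • y, p)) * ψ y

/-- The Born–Jordan operator: the average of the Shubin `τ`-operators
over `τ ∈ [0,1]`. -/
def BJOp (hbar : ℝ) {n : ℕ} (a : ((Fin n → ℝ) × (Fin n → ℝ)) → ℂ)
    (ψ : (Fin n → ℝ) → ℂ) (x : Fin n → ℝ) : ℂ :=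
  ∫ τ in (0:ℝ)..1, ShubinOp hbar τ a ψ x

/-- `Θ(x,p) = sin(p·x/2hbar)/(p·x/2hbar)` (with value `1` when `p·x = 0`). -/
def Theta (hbar : ℝ) {n : ℕ} (x p : Fin n → ℝ) : ℝ :=
  if dotR p x = 0 then 1
  else Real.sin (dotR p x / (2 * hbar)) / (dotR p x / (2 * hbar))

/-- The modified Heisenberg–Weyl operator
`T̂_τ(z₀)ψ(x) = e^((i/hbar)(p₀·x − (1−τ)p₀·x₀)) ψ(x−x₀)`. -/
def THW (hbar : ℝ) {n : ℕ} (τ : ℝ) (z₀ : (Fin n → ℝ) × (Fin n → ℝ))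
    (ψ : (Fin n → ℝ) → ℂ) (x : Fin n → ℝ) : ℂ :=
  Complex.exp ((Complex.I / (hbar : ℂ)) *
      ((dotR z₀.2 x - (1 - τ) * dotR z₀.2 z₀.1 : ℝ) : ℂ)) * ψ (x - z₀.1)

/-- The symplectic Fourier transform
`F_σ a(z) = (2πhbar)^(−n) ∫ e^(−(i/hbar)σ(z,z′)) a(z′) dz′`,
`σ((x,p),(x′,p′)) = p·x′ − p′·x`. -/
def symplFT (hbar : ℝ) {n : ℕ} (a : ((Fin n → ℝ) × (Fin n → ℝ)) → ℂ)
    (z : (Fin n → ℝ) × (Fin n → ℝ)) : ℂ :=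
  ((((2 * π * hbar) ^ n : ℝ))⁻¹ : ℂ) *
    ∫ z' : (Fin n → ℝ) × (Fin n → ℝ),
      Complex.exp (-(Complex.I / (hbar : ℂ)) *
        ((dotR z.2 z'.1 - dotR z'.2 z.1 : ℝ) : ℂ)) * a z'

/-- The cross-ambiguity function
`Amb(ψ,φ)(x,p) = (2πhbar)^(−n) ∫ e^(−(i/hbar) p·x′) ψ(x′+x/2) conj(φ(x′−x/2)) dx′`. -/
def Amb (hbar : ℝ) {n : ℕ} (ψ φ : (Fin n → ℝ) → ℂ) (x p : Fin n → ℝ) : ℂ :=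
  ((((2 * π * hbar) ^ n : ℝ))⁻¹ : ℂ) *
    ∫ x' : Fin n → ℝ,
      Complex.exp (-(Complex.I / (hbar : ℂ)) * (dotR p x' : ℝ)) *
        ψ (x' + (1 / 2 : ℝ) • x) * (starRingEnd ℂ) (φ (x' - (1 / 2 : ℝ) • x))

/-!
Fourier inversion on phase space writes the Shubin operator `A_τ` as the superposition of the
Heisenberg–Weyl operators `T_τ(z)` with density `symplFT a z`. The Fourier transform conjugates
`T_τ(z)` into `T_{1−τ}(Jz)`, while `symplFT (a ∘ J⁻¹) (Jz) = symplFT a z`, so it conjugates the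
`τ`-operator of `a` into the `(1−τ)`-operator of `a ∘ J⁻¹`; averaging over `τ ∈ [0,1]` absorbs the
reflection `τ ↦ 1 − τ`.
-/

open scoped FourierTransform SchwartzMap

section Preliminaries

lemma norm_exp_I_div_mul_ofReal (h t : ℝ) :
    ‖Complex.exp (Complex.I / (h : ℂ) * (t : ℂ))‖ = 1 := by
  have hreal : Complex.I / (h : ℂ) * (t : ℂ) = ((t / h : ℝ) : ℂ) * Complex.I := by
    push_cast; ring
  rw [hreal, Complex.norm_exp_ofReal_mul_I]

lemma norm_exp_neg_I_div_mul_ofReal (h t : ℝ) :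
    ‖Complex.exp (-(Complex.I / (h : ℂ)) * (t : ℂ))‖ = 1 := by
  simpa using norm_exp_I_div_mul_ofReal h (-t)

lemma dotR_eq_dotProduct {n : ℕ} (p y : Fin n → ℝ) : dotR p y = p ⬝ᵥ y := rfl

@[fun_prop]
lemma continuous_dotR {n : ℕ} {X : Type*} [TopologicalSpace X] {f g : X → Fin n → ℝ}
    (hf : Continuous f) (hg : Continuous g) : Continuous fun x => dotR (f x) (g x) :=
  hf.dotProduct hg

lemma exists_integrable_forall_norm_slice_le {E F G : Type*}
    [NormedAddCommGroup E] [NormedSpace ℝ E] [NormedAddCommGroup F] [NormedSpace ℝ F]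
    [NormedAddCommGroup G] [NormedSpace ℝ G] [MeasurableSpace F]
    (μ : Measure F) [μ.HasTemperateGrowth] (a : 𝓢(E × F, G)) :
    ∃ g : F → ℝ, Integrable g μ ∧ ∀ u p, ‖a (u, p)‖ ≤ g p := by
  set k := μ.integrablePower
  set C : ℝ := 2 ^ k * (Finset.Iic (k, 0)).sup (fun m => SchwartzMap.seminorm ℝ m.1 m.2) a
  refine ⟨fun p => C * (1 + ‖p‖) ^ (-(k : ℝ)), μ.integrable_pow_neg_integrablePower.const_mul C,
    fun u p => ?_⟩
  have hdecay : (1 + ‖(u, p)‖) ^ k * ‖a (u, p)‖ ≤ C := by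
    simpa using SchwartzMap.one_add_le_sup_seminorm_apply (𝕜 := ℝ) (m := (k, 0))
      le_rfl le_rfl a (u, p)
  change ‖a (u, p)‖ ≤ C * (1 + ‖p‖) ^ (-(k : ℝ))
  rw [Real.rpow_neg (by positivity), Real.rpow_natCast, ← div_eq_mul_inv,
    le_div_iff₀' (by positivity)]
  refine le_trans ?_ hdecay
  gcongr
  exact norm_snd_le (u, p)

lemma integrable_mul_comp_sub {G Ω : Type*} [AddGroup G] [MeasurableSpace G] [MeasurableAdd₂ G]
    [MeasurableNeg G] [MeasurableSpace Ω] {ν : Measure G} [SFinite ν] [ν.IsAddRightInvariant]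
    {μ : Measure Ω} [SFinite μ] {R : Type*} [NormedRing R] {c : Ω → R} {f : G → R} {g : Ω → G}
    (hc : Integrable c μ) (hf : Integrable f ν) (hg : Measurable g) :
    Integrable (fun z : G × Ω => c z.2 * f (z.1 - g z.2)) (ν.prod μ) := by
  have hshear : MeasurePreserving (fun z : Ω × G => (z.1, z.2 - g z.1)) (μ.prod ν) (μ.prod ν) :=
    (MeasurePreserving.id μ).skew_product (by fun_prop)
      (.of_forall fun ω => (measurePreserving_sub_right ν (g ω)).map_eq)
  exact (hshear.integrable_comp_of_integrable (hc.mul_prod hf)).swap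

lemma exists_continuousLinearEquiv_inner_eq {V E : Type*} [NormedAddCommGroup V]
    [NormedSpace ℝ V] [NormedAddCommGroup E] [InnerProductSpace ℝ E] [FiniteDimensional ℝ E]
    {L : V →ₗ[ℝ] V →ₗ[ℝ] ℝ} (hL : L.SeparatingRight) (T : V ≃L[ℝ] E) :
    ∃ S : V ≃L[ℝ] E, ∀ v w, inner ℝ (T v) (S w) = L v w := by
  have : FiniteDimensional ℝ V := T.symm.toLinearEquiv.finiteDimensional
  let S : V →ₗ[ℝ] E :=
    { toFun := fun w => (InnerProductSpace.toDual ℝ E).symm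
        (L.flip w ∘ₗ T.symm.toLinearMap).toContinuousLinearMap
      map_add' := fun w w' => by
        rw [← map_add, map_add L.flip, LinearMap.add_comp, map_add]
      map_smul' := fun c w => by
        simp only [map_smul, LinearMap.smul_comp, RingHom.id_apply] }
  have hS (v w : V) : inner ℝ (T v) (S w) = L v w := by
    rw [real_inner_comm]
    simp [S]
  have hinj : Function.Injective S := by
    refine (injective_iff_map_eq_zero S).2 fun w hw => hL w fun v => ?_
    rw [← hS, hw, inner_zero_right]
  let e : V ≃ₗ[ℝ] E := LinearEquiv.ofInjectiveOfFinrankEq S hinj T.toLinearEquiv.finrank_eq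
  exact ⟨e.toContinuousLinearEquiv, hS⟩

lemma integrable_fourierIntegral_of_separatingRight {V : Type*} [NormedAddCommGroup V]
    [NormedSpace ℝ V] [FiniteDimensional ℝ V] [MeasurableSpace V] [BorelSpace V]
    {F : Type*} [NormedAddCommGroup F] [NormedSpace ℂ F] (μ : Measure V) [μ.IsAddHaarMeasure]
    {L : V →ₗ[ℝ] V →ₗ[ℝ] ℝ} (hL : L.SeparatingRight) (f : 𝓢(V, F)) :
    Integrable (VectorFourier.fourierIntegral 𝐞 μ L f) μ := by
  let T : V ≃L[ℝ] EuclideanSpace ℝ (Fin (Module.finrank ℝ V)) := toEuclidean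
  obtain ⟨S, hS⟩ := exists_continuousLinearEquiv_inner_eq hL T
  have hT : MeasurableEmbedding T := T.toHomeomorph.measurableEmbedding
  have : (μ.map T).IsAddHaarMeasure := T.isAddHaarMeasure_map μ
  let g := 𝓕 (SchwartzMap.compCLMOfContinuousLinearEquiv ℝ T.symm f)
  have hg : VectorFourier.fourierIntegral 𝐞 μ L f =
      fun w => (μ.map T).addHaarScalarFactor volume •
        SchwartzMap.compCLMOfContinuousLinearEquiv ℝ S g w := by
    ext w
    calc VectorFourier.fourierIntegral 𝐞 μ L f w
        = ∫ u, 𝐞 (-inner ℝ u (S w)) • f (T.symm u) ∂(μ.map T) := by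
          rw [hT.integral_map]
          simp [VectorFourier.fourierIntegral, hS]
      _ = (μ.map T).addHaarScalarFactor volume •
            ∫ u, 𝐞 (-inner ℝ u (S w)) • f (T.symm u) := by
          conv_lhs => rw [Measure.isAddLeftInvariant_eq_smul (μ.map T) volume]
          exact integral_smul_nnreal_measure _ _
  rw [hg]
  exact (SchwartzMap.integrable _).smul _

lemma fourier_comp_smul {V : Type*} [NormedAddCommGroup V] [InnerProductSpace ℝ V]
    [FiniteDimensional ℝ V] [MeasurableSpace V] [BorelSpace V] {F : Type*} [NormedAddCommGroup F]
    [NormedSpace ℂ F] (f : V → F) (r : ℝ) (w : V) :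
    𝓕 (fun v => f (r • v)) (r • w) = |(r ^ Module.finrank ℝ V)⁻¹| • 𝓕 f w := by
  simp only [Real.fourier_eq, real_inner_smul_right, ← real_inner_smul_left]
  exact Measure.integral_comp_smul volume (fun v => 𝐞 (-inner ℝ v w) • f v) r

end Preliminaries

section SymplJ

/-- The standard symplectic matrix `J(x, p) = (p, −x)`. -/
def symplJ (n : ℕ) :
    ((Fin n → ℝ) × (Fin n → ℝ)) ≃L[ℝ] (Fin n → ℝ) × (Fin n → ℝ) :=
  (ContinuousLinearEquiv.prodComm ℝ _ _).trans
    ((ContinuousLinearEquiv.refl ℝ _).prodCongr (ContinuousLinearEquiv.neg ℝ))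

lemma symplJ_apply {n : ℕ} (z : (Fin n → ℝ) × (Fin n → ℝ)) : symplJ n z = (z.2, -z.1) := rfl

lemma symplJ_symm_apply {n : ℕ} (z : (Fin n → ℝ) × (Fin n → ℝ)) :
    (symplJ n).symm z = (-z.2, z.1) := rfl

lemma measurePreserving_symplJ (n : ℕ) : MeasurePreserving (symplJ n) :=
  ((MeasurePreserving.id volume).prod (Measure.measurePreserving_neg volume)).comp
    Measure.measurePreserving_swap

end SymplJ

section HeisenbergWeyl

variable {n : ℕ} {h : ℝ} {Ω : Type*} [MeasurableSpace Ω] {μ : Measure Ω}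
  {c : Ω → ℂ} {t : Ω → ℝ} {w : Ω → (Fin n → ℝ) × (Fin n → ℝ)}

lemma aestronglyMeasurable_thw_phase (ht : Measurable t) (hw : Measurable w) {x : Ω → Fin n → ℝ}
    (hx : Measurable x) : AEStronglyMeasurable (fun ω => cexp ((Complex.I / (h : ℂ)) *
      ((dotR (w ω).2 (x ω) - (1 - t ω) * dotR (w ω).2 (w ω).1 : ℝ) : ℂ))) μ := by
  have hphase : Continuous fun q : ℝ × ((Fin n → ℝ) × (Fin n → ℝ)) × (Fin n → ℝ) =>
      cexp ((Complex.I / (h : ℂ)) *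
        ((dotR q.2.1.2 q.2.2 - (1 - q.1) * dotR q.2.1.2 q.2.1.1 : ℝ) : ℂ)) := by fun_prop
  exact (hphase.measurable.comp (ht.prodMk (hw.prodMk hx))).aestronglyMeasurable

lemma integrable_mul_thw (ht : Measurable t) (hw : Measurable w) {x : Ω → Fin n → ℝ}
    (hx : Measurable x) (ψ : (Fin n → ℝ) → ℂ)
    (hcψ : Integrable (fun ω => c ω * ψ (x ω - (w ω).1)) μ) :
    Integrable (fun ω => c ω * THW h (t ω) (w ω) ψ (x ω)) μ := by
  unfold THW
  simp only [mul_left_comm (c _)]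
  exact hcψ.bdd_mul (c := 1) (aestronglyMeasurable_thw_phase ht hw hx)
    (.of_forall fun ω => (norm_exp_I_div_mul_ofReal _ _).le)

end HeisenbergWeyl

section FourierHbar

variable {n : ℕ} {h : ℝ}

lemma fourierHbar_congr_ae {f g : (Fin n → ℝ) → ℂ} (hfg : f =ᵐ[volume] g) :
    FourierHbar h f = FourierHbar h g := by
  ext p
  unfold FourierHbar
  congr 1
  exact integral_congr_ae (hfg.mono fun x hx => by simp only [hx])

lemma fourierHbar_const_mul (c : ℂ) (f : (Fin n → ℝ) → ℂ) (p : Fin n → ℝ) :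
    FourierHbar h (fun x => c * f x) p = c * FourierHbar h f p := by
  unfold FourierHbar
  simp only [mul_left_comm _ c, integral_const_mul]

lemma norm_fourierHbar_le (f : (Fin n → ℝ) → ℂ) (p : Fin n → ℝ) :
    ‖FourierHbar h f p‖ ≤ (√((2 * π * h) ^ n))⁻¹ * ∫ x, ‖f x‖ := by
  unfold FourierHbar
  rw [norm_mul, norm_inv, Complex.norm_real, Real.norm_of_nonneg (Real.sqrt_nonneg _)]
  gcongr
  refine (norm_integral_le_integral_norm _).trans_eq ?_
  simp only [norm_mul, norm_exp_neg_I_div_mul_ofReal, one_mul]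

lemma continuous_fourierHbar_of_dominated {X : Type*} [TopologicalSpace X]
    [FirstCountableTopology X] {f : X → (Fin n → ℝ) → ℂ} {p : X → Fin n → ℝ}
    {bound : (Fin n → ℝ) → ℝ} (hmeas : ∀ u, AEStronglyMeasurable (f u))
    (hbound : ∀ u, ∀ᵐ x, ‖f u x‖ ≤ bound x) (h_int : Integrable bound)
    (hf : ∀ᵐ x, Continuous fun u => f u x) (hp : Continuous p) :
    Continuous fun u => FourierHbar h (f u) (p u) := by
  unfold FourierHbar
  refine continuous_const.mul (continuous_of_dominated (bound := bound) (fun u => ?_) (fun u => ?_)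
    h_int (hf.mono fun x hx => ?_))
  · exact (Continuous.aestronglyMeasurable (by fun_prop)).mul (hmeas u)
  · filter_upwards [hbound u] with x hx
    rwa [norm_mul, norm_exp_neg_I_div_mul_ofReal, one_mul]
  · fun_prop

lemma continuous_fourierHbar {f : (Fin n → ℝ) → ℂ} (hf : Integrable f) :
    Continuous (FourierHbar h f) :=
  continuous_fourierHbar_of_dominated (fun _ => hf.aestronglyMeasurable)
    (fun _ => .of_forall fun _ => le_rfl) hf.norm (.of_forall fun _ => continuous_const)
    continuous_id

lemma fourierHbar_integral {Ω : Type*} [MeasurableSpace Ω] {μ : Measure Ω} [SFinite μ]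
    {f : Ω → (Fin n → ℝ) → ℂ}
    (hf : Integrable (fun z : (Fin n → ℝ) × Ω => f z.2 z.1) (volume.prod μ)) (p : Fin n → ℝ) :
    FourierHbar h (fun x => ∫ ω, f ω x ∂μ) p = ∫ ω, FourierHbar h (f ω) p ∂μ := by
  unfold FourierHbar
  simp only [← integral_const_mul (μ := μ)]
  rw [integral_const_mul (μ := μ)]
  congr 1
  refine integral_integral_swap (f := fun x ω => cexp (-(Complex.I / h) * dotR p x) * f ω x)
    (hf.bdd_mul (c := 1) ?_ (.of_forall fun z => ?_))
  · exact (Continuous.aestronglyMeasurable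
      (f := fun x => cexp (-(Complex.I / h) * dotR p x)) (by fun_prop)).comp_fst
  · exact (norm_exp_neg_I_div_mul_ofReal _ _).le

lemma fourierHbar_eq_fourier (f : (Fin n → ℝ) → ℂ) (p : Fin n → ℝ) :
    FourierHbar h f p = ((√((2 * π * h) ^ n))⁻¹ : ℂ) *
      𝓕 (fun v : EuclideanSpace ℝ (Fin n) => f v.ofLp) ((2 * π * h)⁻¹ • WithLp.toLp 2 p) := by
  unfold FourierHbar
  congr 1
  rw [Real.fourier_eq', ← (PiLp.volume_preserving_toLp (Fin n)).integral_comp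
    (MeasurableEquiv.toLp 2 (Fin n → ℝ)).measurableEmbedding]
  refine integral_congr_ae (.of_forall fun x => ?_)
  simp only [← WithLp.toLp_smul, EuclideanSpace.inner_toLp_toLp, star_trivial,
    smul_dotProduct, smul_eq_mul, dotR_eq_dotProduct]
  congr 2
  push_cast
  rcases eq_or_ne h 0 with rfl | _
  · simp
  · field_simp

lemma sqrt_two_pi_mul_pow_inv_mul_self (hh : 0 < h) :
    ((√((2 * π * h) ^ n))⁻¹ : ℂ) * ((√((2 * π * h) ^ n))⁻¹ : ℂ) =
      ((((2 * π * h) ^ n : ℝ))⁻¹ : ℂ) := by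
  rw [← mul_inv, ← Complex.ofReal_mul, Real.mul_self_sqrt (by positivity)]

lemma sqrt_two_pi_mul_pow_inv_ne_zero (hh : 0 < h) : ((√((2 * π * h) ^ n))⁻¹ : ℂ) ≠ 0 := by
  have hsqrt : √((2 * π * h) ^ n) ≠ 0 := by positivity
  exact_mod_cast inv_ne_zero hsqrt

theorem fourierHbar_fourierHbar (hh : 0 < h) {f : (Fin n → ℝ) → ℂ} (hcont : Continuous f)
    (hf : Integrable f) (hFf : Integrable (FourierHbar h f)) (x : Fin n → ℝ) :
    FourierHbar h (FourierHbar h f) x = f (-x) := by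
  let g : EuclideanSpace ℝ (Fin n) → ℂ := fun v => f v.ofLp
  have hmp := PiLp.volume_preserving_ofLp (Fin n)
  have hk : (2 * π * h)⁻¹ ≠ 0 := by positivity
  have hg : Integrable g := hmp.integrable_comp_of_integrable hf
  have hFg : Integrable (𝓕 g) := by
    rw [← integrable_comp_smul_iff volume _ hk]
    have hunit := (sqrt_two_pi_mul_pow_inv_ne_zero (n := n) hh).isUnit
    refine (integrable_const_mul_iff hunit _).1 ?_
    exact (hmp.integrable_comp_of_integrable hFf).congr
      (.of_forall fun v => fourierHbar_eq_fourier f v.ofLp)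
  have hinv : 𝓕 (𝓕 g) (WithLp.toLp 2 x) = f (-x) := by
    rw [← neg_neg (WithLp.toLp 2 x), ← Real.fourierInv_eq_fourier_neg,
      Continuous.fourierInv_fourier_eq (by fun_prop) hg hFg]
    rfl
  have hscale :
      |((2 * π * h)⁻¹ ^ Module.finrank ℝ (EuclideanSpace ℝ (Fin n)))⁻¹| = (2 * π * h) ^ n := by
    rw [finrank_euclideanSpace_fin, inv_pow, inv_inv, abs_of_pos (by positivity)]
  rw [funext (fourierHbar_eq_fourier f), fourierHbar_const_mul, fourierHbar_eq_fourier,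
    ← mul_assoc, sqrt_two_pi_mul_pow_inv_mul_self hh, fourier_comp_smul, hscale, hinv]
  rw [Complex.real_smul, inv_mul_cancel_left₀]
  exact_mod_cast (by positivity : (2 * π * h) ^ n ≠ 0)

lemma fourierHbar_thw (τ : ℝ) (z : (Fin n → ℝ) × (Fin n → ℝ)) (ψ : (Fin n → ℝ) → ℂ)
    (p : Fin n → ℝ) :
    FourierHbar h (THW h τ z ψ) p = THW h (1 - τ) (symplJ n z) (FourierHbar h ψ) p := by
  unfold FourierHbar THW
  rw [symplJ_apply, mul_left_comm (cexp _), ← integral_const_mul (cexp _),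
    ← integral_add_right_eq_self _ z.1]
  congr 1
  refine integral_congr_ae (.of_forall fun y => ?_)
  beta_reduce
  rw [add_sub_cancel_right, ← mul_assoc, ← mul_assoc, ← Complex.exp_add, ← Complex.exp_add]
  congr 2
  simp only [dotR_eq_dotProduct, dotProduct_add, neg_dotProduct, sub_dotProduct,
    dotProduct_comm z.1]
  push_cast
  ring

end FourierHbar

section SymplFT

variable {n : ℕ} {h : ℝ}

instance isAddHaarMeasure_volume_phaseSpace :
    (volume : Measure ((Fin n → ℝ) × (Fin n → ℝ))).IsAddHaarMeasure :=
  Measure.prod.instIsAddHaarMeasure _ _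

lemma symplFT_comp_symplJ_symm (a : (Fin n → ℝ) × (Fin n → ℝ) → ℂ)
    (z : (Fin n → ℝ) × (Fin n → ℝ)) :
    symplFT h (a ∘ (symplJ n).symm) (symplJ n z) = symplFT h a z := by
  unfold symplFT
  rw [← (measurePreserving_symplJ n).integral_comp
    (symplJ n).toHomeomorph.measurableEmbedding]
  congr 1
  refine integral_congr_ae (.of_forall fun w => ?_)
  simp only [Function.comp_apply, symplJ_symm_apply, symplJ_apply, neg_neg,
    dotR_eq_dotProduct, neg_dotProduct, dotProduct_comm z.1, dotProduct_comm w.1]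
  congr 4
  ring

lemma symplFT_eq_fourierHbar_fourierHbar (hh : 0 < h) {a : (Fin n → ℝ) × (Fin n → ℝ) → ℂ}
    (ha : Integrable a) (x p : Fin n → ℝ) :
    symplFT h a (x, p) =
      FourierHbar h (fun x' => FourierHbar h (fun p' => a (x', p')) (-x)) p := by
  have hexp (x' p' : Fin n → ℝ) :
      cexp (-(Complex.I / h) * ((dotR p x' - dotR p' x : ℝ) : ℂ)) * a (x', p') =
        cexp (-(Complex.I / h) * dotR p x') *
          (cexp (-(Complex.I / h) * dotR (-x) p') * a (x', p')) := by
    rw [← mul_assoc, ← Complex.exp_add]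
    congr 2
    simp only [dotR_eq_dotProduct, neg_dotProduct, dotProduct_comm x]
    push_cast
    ring
  have h_int : Integrable fun z' : (Fin n → ℝ) × (Fin n → ℝ) =>
      cexp (-(Complex.I / h) * ((dotR p z'.1 - dotR z'.2 x : ℝ) : ℂ)) * a z' :=
    ha.bdd_mul (c := 1) (Continuous.aestronglyMeasurable (by fun_prop))
      (.of_forall fun z' => (norm_exp_neg_I_div_mul_ofReal _ _).le)
  unfold symplFT FourierHbar
  simp only [mul_left_comm _ ((√((2 * π * h) ^ n))⁻¹ : ℂ), integral_const_mul]
  rw [← mul_assoc, sqrt_two_pi_mul_pow_inv_mul_self hh, Measure.volume_eq_prod,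
    integral_prod _ h_int]
  simp only [hexp, integral_const_mul]

/-- The bilinear form `(z', z) ↦ σ(z, z') / (2πħ)`, which turns `symplFT` into a
`VectorFourier.fourierIntegral` for the standard character `𝐞 t = e^(2πit)`. -/
def symplBilin (n : ℕ) (h : ℝ) :
    (Fin n → ℝ) × (Fin n → ℝ) →ₗ[ℝ] (Fin n → ℝ) × (Fin n → ℝ) →ₗ[ℝ] ℝ :=
  let dot := dotProductBilin ℝ ℝ
  (2 * π * h)⁻¹ • (dot.compl₁₂ (.fst ℝ _ _) (.snd ℝ _ _) - dot.compl₁₂ (.snd ℝ _ _) (.fst ℝ _ _))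

lemma symplBilin_apply (z' z : (Fin n → ℝ) × (Fin n → ℝ)) :
    symplBilin n h z' z = (2 * π * h)⁻¹ * (dotR z.2 z'.1 - dotR z'.2 z.1) := by
  simp [symplBilin, dotR_eq_dotProduct, dotProduct_comm z'.1]

lemma symplBilin_separatingRight (hh : h ≠ 0) : (symplBilin n h).SeparatingRight := by
  intro z hz
  have hzero (w : (Fin n → ℝ) × (Fin n → ℝ)) : dotR z.2 w.1 - dotR w.2 z.1 = 0 := by
    have hk : (2 * π * h)⁻¹ ≠ 0 := by positivity
    exact (mul_eq_zero_iff_left hk).1 (symplBilin_apply w z ▸ hz w)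
  refine Prod.ext (dotProduct_self_eq_zero.1 ?_) (dotProduct_self_eq_zero.1 ?_)
  · simpa [dotR_eq_dotProduct] using hzero (0, z.1)
  · simpa [dotR_eq_dotProduct] using hzero (z.2, 0)

lemma symplFT_eq_fourierIntegral (a : (Fin n → ℝ) × (Fin n → ℝ) → ℂ)
    (z : (Fin n → ℝ) × (Fin n → ℝ)) :
    symplFT h a z = ((((2 * π * h) ^ n : ℝ))⁻¹ : ℂ) *
      VectorFourier.fourierIntegral 𝐞 volume (symplBilin n h) a z := by
  unfold symplFT VectorFourier.fourierIntegral
  congr 1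
  refine integral_congr_ae (.of_forall fun w => ?_)
  simp only [symplBilin_apply, Circle.smul_def, Real.fourierChar_apply, smul_eq_mul]
  congr 2
  push_cast
  rcases eq_or_ne h 0 with rfl | _
  · simp
  · field_simp

lemma integrable_symplFT (hh : h ≠ 0) (a : 𝓢((Fin n → ℝ) × (Fin n → ℝ), ℂ)) :
    Integrable (symplFT h a) := by
  rw [funext (symplFT_eq_fourierIntegral a)]
  exact (integrable_fourierIntegral_of_separatingRight volume
    (symplBilin_separatingRight hh) a).const_mul _

lemma ae_fourierHbar_symplFT_slice (hh : 0 < h) (a : 𝓢((Fin n → ℝ) × (Fin n → ℝ), ℂ)) :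
    ∀ᵐ x, ∀ u, FourierHbar h (fun p => symplFT h a (x, p)) u =
      FourierHbar h (fun p => a (-u, p)) (-x) := by
  obtain ⟨g, hg, hag⟩ := exists_integrable_forall_norm_slice_le volume a
  have ha : Integrable a := a.integrable
  filter_upwards [(integrable_symplFT hh.ne' a).prod_right_ae] with x hx u
  have hcont : Continuous fun x' => FourierHbar h (fun p => a (x', p)) (-x) :=
    continuous_fourierHbar_of_dominated
      (fun x' => Continuous.aestronglyMeasurable (by fun_prop))
      (fun x' => .of_forall (hag x')) hg (.of_forall fun p => by fun_prop) continuous_const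
  have h_int : Integrable fun x' => FourierHbar h (fun p => a (x', p)) (-x) := by
    unfold FourierHbar
    refine (Integrable.integral_prod_left (μ := volume) (ν := volume)
      (f := fun z => cexp (-(Complex.I / h) * dotR (-x) z.2) * a z) ?_).const_mul _
    exact ha.bdd_mul (c := 1) (Continuous.aestronglyMeasurable (by fun_prop))
      (.of_forall fun z => (norm_exp_neg_I_div_mul_ofReal _ _).le)
  have heq := funext (symplFT_eq_fourierHbar_fourierHbar hh a.integrable x)
  rw [heq] at hx ⊢
  exact fourierHbar_fourierHbar hh hcont h_int hx u

end SymplFT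

section Shubin

variable {n : ℕ} {h : ℝ}

lemma fourierHbar_integral_mul_thw {Ω : Type*} [MeasurableSpace Ω] {μ : Measure Ω} [SFinite μ]
    {c : Ω → ℂ} {t : Ω → ℝ} {w : Ω → (Fin n → ℝ) × (Fin n → ℝ)} (hc : Integrable c μ)
    (ht : Measurable t) (hw : Measurable w) {ψ : (Fin n → ℝ) → ℂ} (hψ : Integrable ψ)
    (p : Fin n → ℝ) :
    FourierHbar h (fun x => ∫ ω, c ω * THW h (t ω) (w ω) ψ x ∂μ) p =
      ∫ ω, c ω * THW h (1 - t ω) (symplJ n (w ω)) (FourierHbar h ψ) p ∂μ := by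
  rw [fourierHbar_integral (f := fun ω x => c ω * THW h (t ω) (w ω) ψ x)
    (integrable_mul_thw (ht.comp measurable_snd) (hw.comp measurable_snd) measurable_fst ψ
      (integrable_mul_comp_sub hc hψ hw.fst))]
  simp only [fourierHbar_const_mul, fourierHbar_thw]

lemma ae_integral_exp_mul_symplFT_slice (hh : 0 < h) (a : 𝓢((Fin n → ℝ) × (Fin n → ℝ), ℂ)) :
    ∀ᵐ x, ∀ u, ∫ p, cexp (Complex.I / h * dotR p u) * symplFT h a (x, p) =
      ∫ p, cexp (Complex.I / h * dotR p x) * a (u, p) := by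
  filter_upwards [ae_fourierHbar_symplFT_slice hh a] with x hx u
  have hslice := mul_left_cancel₀ (sqrt_two_pi_mul_pow_inv_ne_zero hh) (hx (-u))
  simpa only [dotR_eq_dotProduct, neg_dotProduct, Complex.ofReal_neg, neg_mul_neg, neg_neg,
    dotProduct_comm u, dotProduct_comm x] using hslice

theorem shubinOp_eq_integral_symplFT_mul_thw (hh : 0 < h)
    (a : 𝓢((Fin n → ℝ) × (Fin n → ℝ), ℂ)) (τ : ℝ) (φ : (Fin n → ℝ) → ℂ) (x : Fin n → ℝ)
    (hφ : Integrable fun z => symplFT h a z * THW h τ z φ x) :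
    ShubinOp h τ a φ x =
      ((((2 * π * h) ^ n : ℝ))⁻¹ : ℂ) * ∫ z, symplFT h a z * THW h τ z φ x := by
  unfold ShubinOp
  congr 1
  rw [Measure.volume_eq_prod, integral_prod _ hφ, ← integral_sub_left_eq_self _ volume x]
  refine integral_congr_ae ?_
  filter_upwards [ae_integral_exp_mul_symplFT_slice hh a] with x₀ hx₀
  have hmid : τ • x + (1 - τ) • (x - x₀) = x - (1 - τ) • x₀ := by module
  have hphase (p : Fin n → ℝ) :
      dotR p x - (1 - τ) * dotR p x₀ = dotR p (x - (1 - τ) • x₀) := by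
    simp only [dotR_eq_dotProduct, dotProduct_sub, dotProduct_smul, smul_eq_mul]
  simp only [sub_sub_cancel, hmid, ← hx₀, ← integral_mul_const, THW, hphase]
  exact integral_congr_ae (.of_forall fun p => by ring)

lemma integral_shubinOp_eq_integral_symplFT_mul_thw (hh : 0 < h)
    (a : 𝓢((Fin n → ℝ) × (Fin n → ℝ), ℂ)) {ν : Measure ℝ} [SFinite ν] {t : ℝ → ℝ}
    (ht : Measurable t) {φ : (Fin n → ℝ) → ℂ} {x : Fin n → ℝ}
    (hφ : Integrable (fun q : ℝ × (Fin n → ℝ) × (Fin n → ℝ) =>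
      symplFT h a q.2 * φ (x - q.2.1)) (ν.prod volume)) :
    ∫ τ, ShubinOp h (t τ) a φ x ∂ν = ((((2 * π * h) ^ n : ℝ))⁻¹ : ℂ) *
      ∫ q : ℝ × (Fin n → ℝ) × (Fin n → ℝ),
        symplFT h a q.2 * THW h (t q.1) q.2 φ x ∂(ν.prod volume) := by
  have hthw := integrable_mul_thw (h := h) (ht.comp measurable_fst) measurable_snd
    measurable_const φ hφ
  refine Eq.trans ?_ (congrArg _ (integral_prod _ hthw).symm)
  rw [← integral_const_mul]
  refine integral_congr_ae ?_
  filter_upwards [hthw.prod_right_ae] with τ hτ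
  exact shubinOp_eq_integral_symplFT_mul_thw hh a (t τ) φ x hτ

theorem fourierHbar_integral_shubinOp (hh : 0 < h) (ν : Measure ℝ) [IsFiniteMeasure ν]
    (a : 𝓢((Fin n → ℝ) × (Fin n → ℝ), ℂ)) {ψ : (Fin n → ℝ) → ℂ} (hψ : Integrable ψ)
    (ξ : Fin n → ℝ) :
    FourierHbar h (fun x => ∫ τ, ShubinOp h τ a ψ x ∂ν) ξ =
      ∫ τ, ShubinOp h (1 - τ) (a ∘ (symplJ n).symm) (FourierHbar h ψ) ξ ∂ν := by
  let b : 𝓢((Fin n → ℝ) × (Fin n → ℝ), ℂ) :=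
    SchwartzMap.compCLMOfContinuousLinearEquiv ℝ (symplJ n).symm a
  have h_int (a' : 𝓢((Fin n → ℝ) × (Fin n → ℝ), ℂ)) :
      Integrable (fun q : ℝ × (Fin n → ℝ) × (Fin n → ℝ) => symplFT h a' q.2) (ν.prod volume) :=
    (integrable_symplFT hh.ne' a').comp_snd ν
  have hJ : MeasurePreserving (Prod.map id (symplJ n)) (ν.prod volume) (ν.prod volume) :=
    (MeasurePreserving.id ν).prod (measurePreserving_symplJ n)
  have hJemb : MeasurableEmbedding (Prod.map (id : ℝ → ℝ) (symplJ n)) :=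
    MeasurableEmbedding.id.prodMap (symplJ n).toHomeomorph.measurableEmbedding
  have hrep : (fun x => ∫ τ, ShubinOp h τ a ψ x ∂ν) =ᵐ[volume] fun x =>
      ((((2 * π * h) ^ n : ℝ))⁻¹ : ℂ) * ∫ q : ℝ × (Fin n → ℝ) × (Fin n → ℝ),
        symplFT h a q.2 * THW h q.1 q.2 ψ x ∂(ν.prod volume) := by
    filter_upwards [(integrable_mul_comp_sub (h_int a) hψ measurable_snd.fst).prod_right_ae]
      with x hx
    exact integral_shubinOp_eq_integral_symplFT_mul_thw hh a measurable_id hx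
  calc FourierHbar h (fun x => ∫ τ, ShubinOp h τ a ψ x ∂ν) ξ
      = ((((2 * π * h) ^ n : ℝ))⁻¹ : ℂ) * ∫ q : ℝ × (Fin n → ℝ) × (Fin n → ℝ),
          symplFT h b (symplJ n q.2) *
            THW h (1 - q.1) (symplJ n q.2) (FourierHbar h ψ) ξ ∂(ν.prod volume) := by
        rw [fourierHbar_congr_ae hrep, fourierHbar_const_mul,
          fourierHbar_integral_mul_thw (h_int a) measurable_fst measurable_snd hψ]
        simp only [← symplFT_comp_symplJ_symm a]
        rfl
    _ = ((((2 * π * h) ^ n : ℝ))⁻¹ : ℂ) * ∫ q : ℝ × (Fin n → ℝ) × (Fin n → ℝ),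
          symplFT h b q.2 * THW h (1 - q.1) q.2 (FourierHbar h ψ) ξ ∂(ν.prod volume) :=
        congrArg _ (hJ.integral_comp hJemb fun q =>
          symplFT h b q.2 * THW h (1 - q.1) q.2 (FourierHbar h ψ) ξ)
    _ = ∫ τ, ShubinOp h (1 - τ) b (FourierHbar h ψ) ξ ∂ν := by
        refine (integral_shubinOp_eq_integral_symplFT_mul_thw hh b (by fun_prop) ?_).symm
        have hFψ := continuous_fourierHbar (h := h) hψ
        exact (h_int b).mul_bdd (Continuous.aestronglyMeasurable (by fun_prop))
          (.of_forall fun q => norm_fourierHbar_le ψ _)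

end Shubin

theorem bjOp_fourier_covariance_general (hbar : ℝ) (hh : 0 < hbar) (n : ℕ)
    (a : 𝓢((Fin n → ℝ) × (Fin n → ℝ), ℂ)) (ψ : (Fin n → ℝ) → ℂ) (hψ : Integrable ψ)
    (x : Fin n → ℝ) :
    FourierHbar hbar (BJOp hbar a ψ) x =
      BJOp hbar (fun z => a (-z.2, z.1)) (FourierHbar hbar ψ) x := by
  let b := a ∘ (symplJ n).symm
  calc FourierHbar hbar (BJOp hbar a ψ) x
      = FourierHbar hbar (fun y => ∫ τ in Set.Ioc 0 1, ShubinOp hbar τ a ψ y) x := by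
        unfold BJOp
        simp only [intervalIntegral.integral_of_le zero_le_one]
    _ = ∫ τ in Set.Ioc 0 1, ShubinOp hbar (1 - τ) b (FourierHbar hbar ψ) x :=
        fourierHbar_integral_shubinOp hh _ a hψ x
    _ = ∫ τ in (0 : ℝ)..1, ShubinOp hbar (1 - τ) b (FourierHbar hbar ψ) x :=
        (intervalIntegral.integral_of_le zero_le_one).symm
    _ = ∫ τ in (0 : ℝ)..1, ShubinOp hbar τ b (FourierHbar hbar ψ) x := by
        simpa using intervalIntegral.integral_comp_sub_left
          (fun τ => ShubinOp hbar τ b (FourierHbar hbar ψ) x) 1 (a := 0) (b := 1)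

/-- Symplectic covariance of Born–Jordan quantization under the metaplectic
Fourier transform: `F Op_BJ(a) F⁻¹ = Op_BJ(a ∘ J⁻¹)` with `J(x,p) = (p,−x)`, i.e.
`F(A_BJ ψ) = B_BJ(Fψ)` where `B_BJ` has symbol `b(x,p) = a(−p, x)`. -/
theorem bjOp_fourier_covariance (hbar : ℝ) (hh : 0 < hbar) (n : ℕ) (hn : 1 ≤ n)
    (a : SchwartzMap ((Fin n → ℝ) × (Fin n → ℝ)) ℂ)
    (ψ : SchwartzMap (Fin n → ℝ) ℂ) (x : Fin n → ℝ) :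
    FourierHbar hbar (BJOp hbar (⇑a) (⇑ψ)) x =
      BJOp hbar (fun z => a (-z.2, z.1)) (FourierHbar hbar (⇑ψ)) x := by
  exact bjOp_fourier_covariance_general hbar hh n a ψ ψ.integrable x

end
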